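/- arXiv:0906.2450 — 2 statements merged into one kernel-verified Lean document; each statement's English description precedes it below -/
import Mathlib

section
/- For every nonnegative integer n, there exist integers x, y, z such that n = 3·p_3(x) + p_5(y) + p_7(z), where p_3(x) = (x² + x)/2, p_5(y) = (3y² − y)/2, and p_7(z) = (5z² − 3z)/2. In other words, the sum 3p_3 + p_5 + p_7 is universal over ℤ. -/
/-- Generalized triangular number: `p₃(x) = (x² + x)/2`. -/
def p3 (x : ℤ) : ℤ := (x ^ 2 + x) / 2

/-- Generalized pentagonal number: `p₅(x) = (3x² − x)/2`. -/
def p5 (x : ℤ) : ℤ := (3 * x ^ 2 - x) / 2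

/-- Generalized heptagonal number: `p₇(x) = (5x² − 3x)/2`. -/
def p7 (x : ℤ) : ℤ := (5 * x ^ 2 - 3 * x) / 2

/-!
It suffices to write `N = 120n + 77` as `45X² + 5W² + 3Z²` with `X = 2x + 1`, `W = ±(6y - 1)` and
`Z = ±(10z - 3)`. As in Ankeny's proof of the three squares theorem, Dirichlet's theorem and
quadratic reciprocity produce a positive definite integral ternary form of determinant `300` which
takes the value `N` and whose values satisfy certain congruences modulo `4` and `5`. Hermite
reduction shows that every such form is equivalent to
`5x² + 8y² + 4yz + 8z² = 5x² + 5(y + z)² + 3(y - z)²`. Modulo `4` the variable `x` is odd, and a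
descent based on `3(u + 5v)² + 5(3u - v)² = 16(3u² + 5v²)` makes the other two squares odd as well.
Modulo `3` exactly one of the two squares with coefficient `5` vanishes, which gives `X` and `W`,
and modulo `5` the third square is `4`, which gives `Z`.
-/

open Matrix

section Congruence

variable {n R : Type*} [Fintype n] [CommRing R]

/-- The symmetric matrix `A`, viewed as the Gram matrix of a quadratic form, takes the value `m`. -/
def Represents (A : Matrix n n R) (m : R) : Prop :=
  ∃ x : n → R, x ⬝ᵥ A *ᵥ x = m

theorem represents_diag (A : Matrix n n R) (i : n) : Represents A (A i i) := by
  classical exact ⟨Pi.single i 1, by simp⟩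

theorem represents_of_isSymm {A : Matrix n n R} (hA : A.IsSymm) (i j : n) (x : R) :
    Represents A (A i i * x ^ 2 + 2 * A i j * x + A j j) := by
  classical
  refine ⟨x • Pi.single i 1 + Pi.single j 1, ?_⟩
  simp only [mulVec_add, mulVec_smul, mulVec_single_one, dotProduct_add, dotProduct_smul,
    add_dotProduct, smul_dotProduct, single_one_dotProduct, col_apply, smul_eq_mul, hA.apply i j]
  ring

variable [DecidableEq n]

/-- Congruence of Gram matrices, that is, equivalence of the quadratic forms under an invertible
change of variables. -/
def IsCongruent (A B : Matrix n n R) : Prop :=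
  ∃ U : Matrix n n R, IsUnit U ∧ Uᵀ * A * U = B

namespace IsCongruent

variable {A B C : Matrix n n R}

theorem refl (A : Matrix n n R) : IsCongruent A A :=
  ⟨1, isUnit_one, by rw [transpose_one, Matrix.one_mul, Matrix.mul_one]⟩

theorem symm (h : IsCongruent A B) : IsCongruent B A := by
  obtain ⟨_, ⟨U, rfl⟩, rfl⟩ := h
  refine ⟨↑U⁻¹, Units.isUnit _, ?_⟩
  calc (↑U⁻¹ : Matrix n n R)ᵀ * ((↑U)ᵀ * A * ↑U) * ↑U⁻¹
      = (↑U * ↑U⁻¹ : Matrix n n R)ᵀ * A * (↑U * ↑U⁻¹) := by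
        simp only [transpose_mul, Matrix.mul_assoc]
    _ = A := by simp only [Units.mul_inv, transpose_one, Matrix.one_mul, Matrix.mul_one]

theorem trans (hAB : IsCongruent A B) (hBC : IsCongruent B C) : IsCongruent A C := by
  obtain ⟨U, hU, rfl⟩ := hAB
  obtain ⟨V, hV, rfl⟩ := hBC
  exact ⟨U * V, hU.mul hV, by simp only [transpose_mul, Matrix.mul_assoc]⟩

theorem represents {m : R} (h : IsCongruent A B) (hm : Represents B m) : Represents A m := by
  obtain ⟨U, -, rfl⟩ := h
  obtain ⟨x, rfl⟩ := hm
  exact ⟨U *ᵥ x, by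
    rw [← mulVec_mulVec, ← mulVec_mulVec, dotProduct_mulVec x, vecMul_transpose]⟩

theorem posDef [PartialOrder R] [StarRing R] [TrivialStar R] (h : IsCongruent A B)
    (hA : A.PosDef) : B.PosDef := by
  obtain ⟨U, hU, rfl⟩ := h
  rw [← conjTranspose_eq_transpose_of_trivial]
  exact hA.conjTranspose_mul_mul_same (mulVec_injective_of_isUnit hU)

theorem det_eq {A B : Matrix n n ℤ} (h : IsCongruent A B) : B.det = A.det := by
  obtain ⟨U, hU, rfl⟩ := h
  rw [det_mul, det_mul, det_transpose, mul_right_comm,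
    Int.isUnit_mul_self ((isUnit_iff_isUnit_det U).1 hU), one_mul]

end IsCongruent

theorem isSymm_of_posDef {n R : Type*} [Ring R] [PartialOrder R] [StarRing R] [TrivialStar R]
    {A : Matrix n n R} (hA : A.PosDef) : A.IsSymm :=
  isHermitian_iff_isSymm.1 hA.isHermitian

theorem isCongruent_submatrix (A : Matrix n n R) (σ : Equiv.Perm n) :
    IsCongruent A (A.submatrix σ σ) := by
  refine ⟨σ⁻¹.permMatrix R, ?_, ?_⟩
  · rw [isUnit_iff_isUnit_det, det_permutation]
    exact (Equiv.Perm.sign σ⁻¹).isUnit.map (Int.castRingHom R)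
  · rw [transpose_permMatrix, inv_inv, PEquiv.toMatrix_toPEquiv_mul, PEquiv.mul_toMatrix_toPEquiv]
    rfl

end Congruence

section PosDef

variable {R : Type*} [CommRing R] {A : Matrix (Fin 3) (Fin 3) R}

theorem dotProduct_mulVec_fin_three (hA : A.IsSymm) (v : Fin 3 → R) :
    v ⬝ᵥ A *ᵥ v = A 0 0 * v 0 ^ 2 + A 1 1 * v 1 ^ 2 + A 2 2 * v 2 ^ 2 +
      2 * A 1 2 * v 1 * v 2 + 2 * A 0 2 * v 0 * v 2 + 2 * A 0 1 * v 0 * v 1 := by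
  simp only [dotProduct, mulVec, Fin.sum_univ_three, hA.apply 0 1, hA.apply 0 2, hA.apply 1 2]
  ring

theorem mul_minors_fin_three (hA : A.IsSymm) :
    (A 0 0 * A 1 1 - A 0 1 ^ 2) * (A 0 0 * A 2 2 - A 0 2 ^ 2) =
      A 0 0 * A.det + (A 0 0 * A 1 2 - A 0 1 * A 0 2) ^ 2 := by
  rw [det_fin_three, hA.apply 0 1, hA.apply 0 2, hA.apply 1 2]
  ring

variable [LinearOrder R] [IsStrictOrderedRing R] [StarRing R] [TrivialStar R]

theorem minor_pos_of_posDef_fin_three (hA : A.PosDef) : 0 < A 0 0 * A 1 1 - A 0 1 ^ 2 := by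
  have hx : ![-A 0 1, A 0 0, 0] ≠ 0 := fun h ↦ hA.diag_pos.ne' (congrFun h 1)
  have hpos := hA.dotProduct_mulVec_pos hx
  rw [star_trivial, dotProduct_mulVec_fin_three (isSymm_of_posDef hA)] at hpos
  simp only [cons_val] at hpos
  refine pos_of_mul_pos_right (a := A 0 0) ?_ hA.diag_pos.le
  linarith

theorem posDef_fin_three_of_leadingMinors_pos (hA : A.IsSymm) (h₁ : 0 < A 0 0)
    (h₂ : 0 < A 0 0 * A 1 1 - A 0 1 ^ 2) (h₃ : 0 < A.det) : A.PosDef := by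
  refine .of_dotProduct_mulVec_pos (isHermitian_iff_isSymm.2 hA) fun v hv ↦ ?_
  set δ := A 0 0 * A 1 1 - A 0 1 ^ 2
  have completed_squares : A 0 0 * δ * (v ⬝ᵥ A *ᵥ v) =
      δ * (A 0 0 * v 0 + A 0 1 * v 1 + A 0 2 * v 2) ^ 2 +
        (δ * v 1 + (A 0 0 * A 1 2 - A 0 1 * A 0 2) * v 2) ^ 2 + A 0 0 * A.det * v 2 ^ 2 := by
    rw [dotProduct_mulVec_fin_three hA]
    linear_combination v 2 ^ 2 * mul_minors_fin_three hA
  rw [star_trivial]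
  refine pos_of_mul_pos_right (a := A 0 0 * δ) ?_ (by positivity)
  rw [completed_squares]
  rcases ne_or_eq (v 2) 0 with h2 | h2
  · positivity
  rcases ne_or_eq (v 1) 0 with h1 | h1
  · have : δ * v 1 ≠ 0 := mul_ne_zero h₂.ne' h1
    simp only [h2, mul_zero, add_zero]
    positivity
  · have h0 : v 0 ≠ 0 := fun h0 ↦ hv (by ext i; fin_cases i <;> assumption)
    simp only [h1, h2, mul_zero, add_zero]
    positivity

end PosDef

section HermiteReduction

/-- Hermite's reduction conditions on the Gram matrix of a positive definite ternary form. Those on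
the `2 × 2` minors say that the binary form with coefficients
`A₀₀A₁₁ - A₀₁²`, `A₀₀A₁₂ - A₀₁A₀₂`, `A₀₀A₂₂ - A₀₂²`, which is `A₀₀` times the form induced on the
orthogonal complement of the first basis vector, is Gauss reduced. -/
structure IsHermiteReduced (A : Matrix (Fin 3) (Fin 3) ℤ) : Prop where
  two_mul_abs_01_le : 2 * |A 0 1| ≤ A 0 0
  two_mul_abs_02_le : 2 * |A 0 2| ≤ A 0 0
  le_11 : A 0 0 ≤ A 1 1
  two_mul_abs_minor_le : 2 * |A 0 0 * A 1 2 - A 0 1 * A 0 2| ≤ A 0 0 * A 1 1 - A 0 1 ^ 2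
  minor_le : A 0 0 * A 1 1 - A 0 1 ^ 2 ≤ A 0 0 * A 2 2 - A 0 2 ^ 2

theorem exists_two_mul_abs_add_mul_le {a : ℤ} (ha : 0 < a) (m : ℤ) :
    ∃ k, 2 * |m + k * a| ≤ a := by
  lift a to ℕ using ha.le
  have hlower := Int.le_bmod (x := m) (m := a) (by omega)
  have hupper := Int.bmod_le (x := m) (m := a) (by omega)
  refine ⟨-m.bdiv a, ?_⟩
  rw [neg_mul, ← sub_eq_add_neg, ← Int.bmod_eq_self_sub_bdiv_mul]
  cases abs_cases (m.bmod a) <;> omega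

variable {A : Matrix (Fin 3) (Fin 3) ℤ}

theorem exists_isCongruent_small_off_diagonal (hA : A.PosDef) :
    ∃ B, IsCongruent A B ∧ B 0 0 = A 0 0 ∧
      B 0 0 * B 1 1 - B 0 1 ^ 2 = A 0 0 * A 1 1 - A 0 1 ^ 2 ∧
      2 * |B 0 1| ≤ B 0 0 ∧ 2 * |B 0 2| ≤ B 0 0 ∧
      2 * |B 0 0 * B 1 2 - B 0 1 * B 0 2| ≤ B 0 0 * B 1 1 - B 0 1 ^ 2 := by
  have hsymm : A.IsSymm := isSymm_of_posDef hA
  obtain ⟨k, hk⟩ := exists_two_mul_abs_add_mul_le hA.diag_pos (A 0 1)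
  obtain ⟨l, hl⟩ := exists_two_mul_abs_add_mul_le (minor_pos_of_posDef_fin_three hA)
    (A 0 0 * A 1 2 - A 0 1 * A 0 2)
  obtain ⟨m, hm⟩ := exists_two_mul_abs_add_mul_le hA.diag_pos (A 0 2 + l * A 0 1)
  set U : Matrix (Fin 3) (Fin 3) ℤ := !![1, k, m; 0, 1, l; 0, 0, 1]
  have hU : IsUnit U := by simp [U, isUnit_iff_isUnit_det, det_fin_three]
  have apply_eq (i j : Fin 3) : (Uᵀ * A * U) i j = ∑ p, ∑ q, U q i * A q p * U p j := by
    simp only [mul_apply, transpose_apply, Finset.sum_mul]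
  have h00 : (Uᵀ * A * U) 0 0 = A 0 0 := by
    simp only [apply_eq, Fin.sum_univ_three, U, of_apply, cons_val', cons_val_fin_one, cons_val]
    ring
  have h01 : (Uᵀ * A * U) 0 1 = A 0 1 + k * A 0 0 := by
    simp only [apply_eq, Fin.sum_univ_three, U, of_apply, cons_val', cons_val_fin_one, cons_val]
    ring
  have h02 : (Uᵀ * A * U) 0 2 = A 0 2 + l * A 0 1 + m * A 0 0 := by
    simp only [apply_eq, Fin.sum_univ_three, U, of_apply, cons_val', cons_val_fin_one, cons_val]
    ring
  have h11 : (Uᵀ * A * U) 1 1 = A 1 1 + 2 * k * A 0 1 + k ^ 2 * A 0 0 := by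
    simp only [apply_eq, Fin.sum_univ_three, U, of_apply, cons_val', cons_val_fin_one, cons_val,
      hsymm.apply 0 1]
    ring
  have h12 : (Uᵀ * A * U) 1 2 =
      A 1 2 + k * A 0 2 + l * A 1 1 + m * A 0 1 + k * l * A 0 1 + k * m * A 0 0 := by
    simp only [apply_eq, Fin.sum_univ_three, U, of_apply, cons_val', cons_val_fin_one, cons_val,
      hsymm.apply 0 1]
    ring
  have hminor : (Uᵀ * A * U) 0 0 * (Uᵀ * A * U) 1 1 - (Uᵀ * A * U) 0 1 ^ 2 =
      A 0 0 * A 1 1 - A 0 1 ^ 2 := by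
    rw [h00, h01, h11]; ring
  have hmixed : (Uᵀ * A * U) 0 0 * (Uᵀ * A * U) 1 2 - (Uᵀ * A * U) 0 1 * (Uᵀ * A * U) 0 2 =
      A 0 0 * A 1 2 - A 0 1 * A 0 2 + l * (A 0 0 * A 1 1 - A 0 1 ^ 2) := by
    rw [h00, h01, h02, h12]; ring
  exact ⟨_, ⟨U, hU, rfl⟩, h00, hminor, by rwa [h00, h01], by rwa [h00, h02],
    by rwa [hmixed, hminor]⟩

theorem exists_isCongruent_isHermiteReduced (hA : A.PosDef) :
    ∃ B, IsCongruent A B ∧ IsHermiteReduced B := by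
  let height (B : Matrix (Fin 3) (Fin 3) ℤ) : ℕ ×ₗ ℕ :=
    toLex ((B 0 0).toNat, (B 0 0 * B 1 1 - B 0 1 ^ 2).toNat)
  obtain ⟨C, hAC, hmin⟩ :=
    (InvImage.wf height wellFounded_lt).has_min {B | IsCongruent A B} ⟨A, IsCongruent.refl A⟩
  obtain ⟨B, hCB, h00, hminor, h01, h02, h12⟩ :=
    exists_isCongruent_small_off_diagonal (hAC.posDef hA)
  have hAB := hAC.trans hCB
  have hpos : 0 < B 0 0 := (hAB.posDef hA).diag_pos
  have hminor_pos := minor_pos_of_posDef_fin_three (hAB.posDef hA)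
  have height_le (σ : Equiv.Perm (Fin 3)) : height B ≤ height (B.submatrix σ σ) := by
    have height_eq : height B = height C := by simp only [height]; rw [hminor, h00]
    rw [height_eq]
    exact not_lt.1 (hmin _ (hAB.trans (isCongruent_submatrix B σ)))
  have hswap₀₁ := height_le (Equiv.swap 0 1)
  have hswap₁₂ := height_le (Equiv.swap 1 2)
  have hfix : Equiv.swap (1 : Fin 3) 2 0 = 0 := by decide
  simp only [height, Prod.Lex.toLex_le_toLex, submatrix_apply, Equiv.swap_apply_left,
    Equiv.swap_apply_right, hfix] at hswap₀₁ hswap₁₂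
  exact ⟨B, hAB, h01, h02, by omega, h12, by omega⟩

theorem IsHermiteReduced.three_mul_sq_minor_le (h : IsHermiteReduced A) (hA : A.PosDef) :
    3 * (A 0 0 * A 1 1 - A 0 1 ^ 2) ^ 2 ≤ 4 * A 0 0 * A.det := by
  have hsq : (2 * |A 0 0 * A 1 2 - A 0 1 * A 0 2|) ^ 2 ≤ (A 0 0 * A 1 1 - A 0 1 ^ 2) ^ 2 :=
    pow_le_pow_left₀ (by positivity) h.two_mul_abs_minor_le 2
  rw [mul_pow, sq_abs] at hsq
  have hle := mul_le_mul_of_nonneg_left h.minor_le (minor_pos_of_posDef_fin_three hA).le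
  rw [mul_minors_fin_three (isSymm_of_posDef hA)] at hle
  linarith

theorem IsHermiteReduced.three_mul_sq_le (h : IsHermiteReduced A) (hA : A.PosDef) :
    3 * A 0 0 ^ 2 ≤ 4 * (A 0 0 * A 1 1 - A 0 1 ^ 2) := by
  have hsq : (2 * |A 0 1|) ^ 2 ≤ A 0 0 ^ 2 :=
    pow_le_pow_left₀ (by positivity) h.two_mul_abs_01_le 2
  rw [mul_pow, sq_abs] at hsq
  have hle := mul_le_mul_of_nonneg_left h.le_11 (hA.diag_pos (i := 0)).le
  linarith

theorem IsHermiteReduced.pow_three_le (h : IsHermiteReduced A) (hA : A.PosDef) :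
    27 * A 0 0 ^ 3 ≤ 64 * A.det := by
  have hpos : 0 < A 0 0 := hA.diag_pos
  have hsq := pow_le_pow_left₀ (by positivity) (h.three_mul_sq_le hA) 2
  refine le_of_mul_le_mul_left ?_ hpos
  linarith [h.three_mul_sq_minor_le hA]

end HermiteReduction

section Classification

/-- Congruence conditions on the values of an integral quadratic form, all of them satisfied by
`5x² + 8y² + 4yz + 8z²`. Together with the determinant they play the role of the genus of that
form. -/
structure HasAdmissibleValues {n : Type*} [Fintype n] (A : Matrix n n ℤ) : Prop where
  mod_four : ∀ m, Represents A m → m % 4 = 0 ∨ m % 4 = 1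
  mod_five : ∀ m, Represents A m → m % 5 ≠ 1 ∧ m % 5 ≠ 4

theorem HasAdmissibleValues.of_isCongruent {n : Type*} [Fintype n] [DecidableEq n]
    {A B : Matrix n n ℤ} (hA : HasAdmissibleValues A) (h : IsCongruent A B) :
    HasAdmissibleValues B where
  mod_four m hm := hA.mod_four m (h.represents hm)
  mod_five m hm := hA.mod_five m (h.represents hm)

theorem HasAdmissibleValues.five_dvd_apply {n : Type*} [Fintype n] {A : Matrix n n ℤ}
    (hA : HasAdmissibleValues A) (hsymm : A.IsSymm) {i : n} (hi : 5 ∣ A i i) (j : n) :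
    5 ∣ A i j := by
  by_contra hndvd
  have htwo : (2 : ZMod 5) ≠ 0 := by decide
  have : Fact (Nat.Prime 5) := ⟨Nat.prime_five⟩
  have hAij : (A i j : ZMod 5) ≠ 0 := by rwa [Ne, ZMod.intCast_zmod_eq_zero_iff_dvd]
  have hAii : (A i i : ZMod 5) = 0 := by rwa [ZMod.intCast_zmod_eq_zero_iff_dvd]
  obtain ⟨x, hx⟩ := ZMod.intCast_surjective ((1 - A j j) / (2 * A i j) : ZMod 5)
  have hvalue : A i i * x ^ 2 + 2 * A i j * x + A j j ≡ 1 [ZMOD 5] := by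
    refine (ZMod.intCast_eq_intCast_iff _ _ 5).1 ?_
    push_cast
    rw [hx, hAii]
    field_simp
    ring
  exact (hA.mod_five _ (represents_of_isSymm hsymm i j x)).1 hvalue

namespace IsHermiteReduced

variable {A : Matrix (Fin 3) (Fin 3) ℤ}

theorem apply_00_eq_five_or_eight (h : IsHermiteReduced A) (hA : A.PosDef) (hdet : A.det = 300)
    (hval : HasAdmissibleValues A) : A 0 0 = 5 ∨ A 0 0 = 8 := by
  have hle : A 0 0 ≤ 8 := by
    by_contra! hlt
    have hcube := pow_le_pow_left₀ (by norm_num : (0 : ℤ) ≤ 9) hlt 3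
    have := h.pow_three_le hA
    omega
  have hpos := hA.diag_pos (i := 0)
  have hmod_four := hval.mod_four _ (represents_diag A 0)
  have hmod_five := hval.mod_five _ (represents_diag A 0)
  omega

theorem apply_00_eq_five (h : IsHermiteReduced A) (hA : A.PosDef) (hdet : A.det = 300)
    (hval : HasAdmissibleValues A) : A 0 0 = 5 := by
  refine (h.apply_00_eq_five_or_eight hA hdet hval).resolve_right fun h00 ↦ ?_
  have hminor : A 0 0 * A 1 1 - A 0 1 ^ 2 ≤ 56 := by
    nlinarith [h.three_mul_sq_minor_le hA]
  obtain ⟨h01_ge, h01_le⟩ : -4 ≤ A 0 1 ∧ A 0 1 ≤ 4 := by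
    rw [← abs_le]
    linarith [h.two_mul_abs_01_le]
  have h11 : A 1 1 = 8 := by
    have hle : A 1 1 ≤ 9 := by nlinarith
    have hge := h.le_11
    have hmod_five := hval.mod_five _ (represents_diag A 1)
    omega
  have hvalue := represents_of_isSymm (isSymm_of_posDef hA) 0 1
  have hadd_four := hval.mod_four _ (hvalue 1)
  have hadd_five := hval.mod_five _ (hvalue 1)
  have hsub_five := hval.mod_five _ (hvalue (-1))
  rw [h00, h11] at hminor hadd_four hadd_five hsub_five
  generalize A 0 1 = t at *
  interval_cases t <;> omega

theorem apply_01_eq_zero (h : IsHermiteReduced A) (hsymm : A.IsSymm)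
    (hval : HasAdmissibleValues A) (h00 : A 0 0 = 5) : A 0 1 = 0 :=
  Int.eq_zero_of_abs_lt_dvd (hval.five_dvd_apply hsymm (by rw [h00]) 1)
    (by linarith [h.two_mul_abs_01_le, abs_nonneg (A 0 1)])

theorem apply_02_eq_zero (h : IsHermiteReduced A) (hsymm : A.IsSymm)
    (hval : HasAdmissibleValues A) (h00 : A 0 0 = 5) : A 0 2 = 0 :=
  Int.eq_zero_of_abs_lt_dvd (hval.five_dvd_apply hsymm (by rw [h00]) 2)
    (by linarith [h.two_mul_abs_02_le, abs_nonneg (A 0 2)])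

theorem apply_11_eq_eight (h : IsHermiteReduced A) (hA : A.PosDef) (hdet : A.det = 300)
    (hval : HasAdmissibleValues A) (h00 : A 0 0 = 5) (h01 : A 0 1 = 0) : A 1 1 = 8 := by
  have hle : A 1 1 ≤ 8 := by
    have hminor := h.three_mul_sq_minor_le hA
    rw [h00, h01, hdet] at hminor
    nlinarith
  have hge := h.le_11
  have hmod_four := hval.mod_four _ (represents_diag A 1)
  have hmod_five := hval.mod_five _ (represents_diag A 1)
  have hadd_four := hval.mod_four _ (represents_of_isSymm (isSymm_of_posDef hA) 0 1 1)
  rw [h01] at hadd_four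
  omega

theorem apply_12_eq_and_apply_22_eq (h : IsHermiteReduced A) (hsymm : A.IsSymm)
    (hdet : A.det = 300) (h00 : A 0 0 = 5) (h01 : A 0 1 = 0) (h02 : A 0 2 = 0)
    (h11 : A 1 1 = 8) : (A 1 2 = 2 ∨ A 1 2 = -2) ∧ A 2 2 = 8 := by
  have hdet_eq : 8 * A 2 2 = 60 + A 1 2 ^ 2 := by
    have hminors := mul_minors_fin_three hsymm
    rw [h00, h01, h02, h11, hdet] at hminors
    linarith
  obtain ⟨h12_ge, h12_le⟩ : -4 ≤ A 1 2 ∧ A 1 2 ≤ 4 := by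
    have hminor := h.two_mul_abs_minor_le
    rw [h00, h01, h02, h11, zero_pow two_ne_zero, mul_zero, sub_zero, sub_zero, abs_mul,
      Nat.abs_ofNat] at hminor
    rw [← abs_le]
    linarith
  generalize A 1 2 = r at *
  interval_cases r <;> omega

end IsHermiteReduced

theorem isCongruent_of_det_eq_300 {A : Matrix (Fin 3) (Fin 3) ℤ} (hA : A.PosDef)
    (hdet : A.det = 300) (hval : HasAdmissibleValues A) :
    IsCongruent A !![5, 0, 0; 0, 8, 2; 0, 2, 8] := by
  obtain ⟨B, hAB, hB⟩ := exists_isCongruent_isHermiteReduced hA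
  replace hA := hAB.posDef hA
  replace hdet := hAB.det_eq.trans hdet
  replace hval := hval.of_isCongruent hAB
  have hsymm := isSymm_of_posDef hA
  have h00 := hB.apply_00_eq_five hA hdet hval
  have h01 := hB.apply_01_eq_zero hsymm hval h00
  have h02 := hB.apply_02_eq_zero hsymm hval h00
  have h11 := hB.apply_11_eq_eight hA hdet hval h00 h01
  obtain ⟨h12, h22⟩ := hB.apply_12_eq_and_apply_22_eq hsymm hdet h00 h01 h02 h11
  refine hAB.trans ?_
  rw [eta_fin_three B, hsymm.apply 0 1, hsymm.apply 0 2, hsymm.apply 1 2, h00, h01, h02, h11, h22]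
  rcases h12 with h12 | h12 <;> rw [h12]
  · exact IsCongruent.refl _
  · refine ⟨diagonal ![1, 1, -1], ?_, ?_⟩
    · simp [isUnit_iff_isUnit_det, Fin.prod_univ_three]
    · decide

end Classification

section Squares

theorem sq_emod_three (x : ℤ) : (x % 3 = 0 ∧ x ^ 2 % 3 = 0) ∨ (x % 3 ≠ 0 ∧ x ^ 2 % 3 = 1) := by
  have : x % 3 = 0 ∨ x % 3 = 1 ∨ x % 3 = 2 := by omega
  rcases this with h | h | h <;> simp [pow_two, Int.mul_emod, h]

theorem sq_emod_five (x : ℤ) : (x % 5 = 0 ∧ x ^ 2 % 5 = 0) ∨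
    ((x % 5 = 1 ∨ x % 5 = 4) ∧ x ^ 2 % 5 = 1) ∨ ((x % 5 = 2 ∨ x % 5 = 3) ∧ x ^ 2 % 5 = 4) := by
  have : x % 5 = 0 ∨ x % 5 = 1 ∨ x % 5 = 2 ∨ x % 5 = 3 ∨ x % 5 = 4 := by omega
  rcases this with h | h | h | h | h <;> simp [pow_two, Int.mul_emod, h]

end Squares

section Construction

open scoped NumberTheorySymbols

theorem exists_prime_eq_mul_sub_fifteen {N : ℕ} (hN : N % 60 = 17) :
    ∃ (p : ℕ) (d : ℤ), p.Prime ∧ N < p ∧ p % 6 = 1 ∧ 0 < d ∧ d % 30 = 2 ∧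
      (p : ℤ) = N * d - 15 := by
  have hcoprime : IsCoprime (2 * (N : ℤ) - 15) ((30 * N : ℕ) : ℤ) := by
    obtain ⟨q, rfl⟩ : ∃ q, N = 60 * q + 17 := ⟨N / 60, by omega⟩
    push_cast
    exact .mul_right ⟨19, -(76 * q + 12), by ring⟩ ⟨32 * q + 9, 8 - 2 * (32 * q + 9), by ring⟩
  obtain ⟨p, hNp, hp, hmod⟩ := Nat.forall_exists_prime_gt_and_zmodEq N (by omega) hcoprime
  obtain ⟨k, hk⟩ := hmod.symm.dvd
  push_cast at hk
  have hpd : (p : ℤ) = N * (30 * k + 2) - 15 := by linarith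
  have hp6 : p % 6 = 1 := by
    have hp2 : p % 2 = 1 := Nat.odd_iff.1 (hp.odd_of_ne_two (by omega))
    obtain ⟨q, rfl⟩ : ∃ q, N = 3 * q + 2 := ⟨N / 3, by omega⟩
    push_cast at hpd
    ring_nf at hpd
    omega
  refine ⟨p, 30 * k + 2, hp, hNp, hp6, pos_of_mul_pos_right (a := (N : ℤ)) ?_ (by positivity),
    by omega, hpd⟩
  linarith [(Nat.cast_nonneg p : (0 : ℤ) ≤ p)]

theorem jacobiSym_neg_three_mul_eq_one {N p : ℕ} (hN : N % 60 = 17) (hp : p % 6 = 1)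
    (hpN : (p : ℤ) ≡ -15 [ZMOD N]) : J(-3 * N | p) = 1 := by
  have hp_odd : Odd p := Nat.odd_iff.2 (by omega)
  have hthree : J(-3 | p) = 1 := by
    rw [jacobiSym.mod_right _ hp_odd]
    have hp12 : p % (4 * (-3 : ℤ).natAbs) = 1 ∨ p % (4 * (-3 : ℤ).natAbs) = 7 := by
      change p % 12 = 1 ∨ p % 12 = 7
      omega
    rcases hp12 with h | h <;> rw [h] <;> norm_num
  have hN60 : N % (4 * (-15 : ℤ).natAbs) = 17 := hN
  have hreciprocity : J(N | p) = 1 := calc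
    J(N | p) = J(p | N) := jacobiSym.quadratic_reciprocity_one_mod_four (by omega) hp_odd
    _ = J(-15 | N) := jacobiSym.mod_left' hpN
    _ = J(-15 | 17) := by rw [jacobiSym.mod_right _ (Nat.odd_iff.2 (by omega)), hN60]
    _ = 1 := by norm_num
  rw [jacobiSym.mul_left, hthree, hreciprocity, one_mul]

theorem exists_dvd_mul_sq_add_of_jacobiSym_eq_one {p : ℕ} [Fact p.Prime] {a b d N : ℤ}
    (hNd : N * d ≡ a * b [ZMOD p]) (hN : ¬(p : ℤ) ∣ N) (hJ : J(-b * N | p) = 1) :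
    ∃ h : ℤ, (p : ℤ) ∣ a * h ^ 2 + d := by
  obtain ⟨y, hy⟩ := ZMod.isSquare_of_jacobiSym_eq_one hJ
  obtain ⟨h, hh⟩ := ZMod.intCast_surjective (y / (N : ZMod p))
  have hN0 : (N : ZMod p) ≠ 0 := by rwa [Ne, ZMod.intCast_zmod_eq_zero_iff_dvd]
  have hNd' : (N : ZMod p) * d = a * b := by
    exact_mod_cast (ZMod.intCast_eq_intCast_iff _ _ p).2 hNd
  refine ⟨h, (ZMod.intCast_zmod_eq_zero_iff_dvd _ p).1 ?_⟩
  push_cast at hy ⊢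
  rw [hh]
  field_simp
  linear_combination (-a : ZMod p) * hy + (N : ZMod p) * hNd'

theorem exists_odd_dvd_mul_sq_add {p a d h : ℤ} (hp : Odd p) (hdvd : p ∣ a * h ^ 2 + d) :
    ∃ h', Odd h' ∧ p ∣ a * h' ^ 2 + d := by
  rcases Int.even_or_odd h with heven | hodd
  · refine ⟨h + p, heven.add_odd hp, ?_⟩
    have hshift : a * (h + p) ^ 2 + d = a * h ^ 2 + d + p * (2 * a * h + a * p) := by ring
    exact hshift ▸ dvd_add hdvd (dvd_mul_right _ _)
  · exact ⟨h, hodd, hdvd⟩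

/-- A ternary Gram matrix taking the value `N` at the last basis vector, after Ankeny's proof of
the three squares theorem. With `p * a = 5 * h ^ 2 + d` and `p = N * d - 15` its determinant is
`20 * (N * d - p) = 300`. -/
def ankenyGram (a h p N : ℤ) : Matrix (Fin 3) (Fin 3) ℤ :=
  !![a, 10 * h, 1; 10 * h, 20 * p, 0; 1, 0, N]

theorem ankenyGram_isSymm (a h p N : ℤ) : (ankenyGram a h p N).IsSymm :=
  .ext fun i j ↦ by fin_cases i <;> fin_cases j <;> rfl

theorem dotProduct_ankenyGram_mulVec (a h p N : ℤ) (v : Fin 3 → ℤ) :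
    v ⬝ᵥ ankenyGram a h p N *ᵥ v =
      a * v 0 ^ 2 + 20 * p * v 1 ^ 2 + N * v 2 ^ 2 + 2 * v 0 * v 2 + 20 * h * v 0 * v 1 := by
  rw [dotProduct_mulVec_fin_three (ankenyGram_isSymm a h p N)]
  change a * v 0 ^ 2 + 20 * p * v 1 ^ 2 + N * v 2 ^ 2 + 2 * 0 * v 1 * v 2 + 2 * 1 * v 0 * v 2 +
    2 * (10 * h) * v 0 * v 1 = _
  ring

variable {a d h p N : ℤ}

theorem det_ankenyGram (ha : p * a = 5 * h ^ 2 + d) (hp : p = N * d - 15) :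
    (ankenyGram a h p N).det = 300 := by
  rw [det_fin_three]
  change a * (20 * p) * N - a * 0 * 0 - 10 * h * (10 * h) * N + 10 * h * 0 * 1 +
    1 * (10 * h) * 0 - 1 * (20 * p) * 1 = 300
  linear_combination 20 * N * ha - 20 * hp

theorem posDef_ankenyGram (ha : p * a = 5 * h ^ 2 + d) (hp : p = N * d - 15) (hp_pos : 0 < p)
    (hd : 0 < d) : (ankenyGram a h p N).PosDef := by
  refine posDef_fin_three_of_leadingMinors_pos (ankenyGram_isSymm a h p N) ?_ ?_ ?_
  · exact pos_of_mul_pos_right (ha ▸ by positivity : 0 < p * a) hp_pos.le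
  · change 0 < a * (20 * p) - (10 * h) ^ 2
    linarith
  · rw [det_ankenyGram ha hp]
    norm_num

theorem hasAdmissibleValues_ankenyGram (ha4 : a % 4 = 1) (ha5 : a % 5 = 3) (hN : N % 20 = 17) :
    HasAdmissibleValues (ankenyGram a h p N) := by
  obtain ⟨r, hr⟩ : ∃ r, N = 20 * r + 17 := ⟨N / 20, by omega⟩
  constructor
  · rintro _ ⟨v, rfl⟩
    obtain ⟨q, rfl⟩ : ∃ q, a = 4 * q + 1 := ⟨a / 4, by omega⟩
    have hmod : v ⬝ᵥ ankenyGram (4 * q + 1) h p N *ᵥ v ≡ (v 0 + v 2) ^ 2 [ZMOD 4] := by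
      rw [dotProduct_ankenyGram_mulVec, hr]
      exact (Int.modEq_iff_dvd.2 ⟨q * v 0 ^ 2 + 5 * p * v 1 ^ 2 + (5 * r + 4) * v 2 ^ 2 +
        5 * h * v 0 * v 1, by ring⟩).symm
    rw [hmod.eq]
    rcases Int.even_or_odd (v 0 + v 2) with ⟨m, hm⟩ | hodd
    · exact .inl (Int.emod_eq_zero_of_dvd ⟨m ^ 2, by rw [hm]; ring⟩)
    · exact .inr (Int.sq_mod_four_eq_one_of_odd hodd)
  · rintro _ ⟨v, rfl⟩
    obtain ⟨q, rfl⟩ : ∃ q, a = 5 * q + 3 := ⟨a / 5, by omega⟩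
    have hmod : v ⬝ᵥ ankenyGram (5 * q + 3) h p N *ᵥ v ≡ 2 * (v 2 + 3 * v 0) ^ 2 [ZMOD 5] := by
      rw [dotProduct_ankenyGram_mulVec, hr]
      exact (Int.modEq_iff_dvd.2 ⟨q * v 0 ^ 2 + 4 * p * v 1 ^ 2 + (4 * r + 3) * v 2 ^ 2 +
        4 * h * v 0 * v 1 - 3 * v 0 ^ 2 - 2 * v 0 * v 2, by ring⟩).symm
    have hsq := sq_emod_five (v 2 + 3 * v 0)
    rw [hmod.eq]
    omega

theorem emod_four_eq_one_of_mul_eq (ha : p * a = 5 * h ^ 2 + d) (hp : p = N * d - 15)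
    (hp_odd : Odd p) (hh : Odd h) (hN : N % 4 = 1) : a % 4 = 1 := by
  obtain ⟨r, rfl⟩ : ∃ r, N = 4 * r + 1 := ⟨N / 4, by omega⟩
  obtain ⟨m, rfl⟩ := hh
  have hdvd : 2 ^ 2 ∣ p * (a - 1) :=
    ⟨5 * m ^ 2 + 5 * m + 5 - r * d, by linear_combination ha - hp⟩
  have hcoprime : IsCoprime (2 ^ 2) p := (Int.isCoprime_two_left.2 hp_odd).pow_left
  have := hcoprime.dvd_of_dvd_mul_left hdvd
  omega

theorem emod_five_eq_three_of_mul_eq (ha : p * a = 5 * h ^ 2 + d) (hp : p = N * d - 15)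
    (hd : d % 5 = 2) (hN : N % 5 = 2) : a % 5 = 3 := by
  obtain ⟨r, rfl⟩ : ∃ r, N = 5 * r + 2 := ⟨N / 5, by omega⟩
  obtain ⟨k, rfl⟩ : ∃ k, d = 5 * k + 2 := ⟨d / 5, by omega⟩
  obtain ⟨s, rfl⟩ : ∃ s, p = 5 * s + 4 := ⟨(p - 4) / 5, by rw [hp]; ring_nf; omega⟩
  have : 4 * a = 5 * (h ^ 2 + k - s * a) + 2 := by linear_combination ha
  omega

theorem represents_of_emod_sixty_eq {N : ℕ} (hN : N % 60 = 17) :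
    Represents !![5, 0, 0; 0, 8, 2; 0, 2, 8] (N : ℤ) := by
  obtain ⟨p, d, hprime, hNp, hp6, hd, hd30, hpd⟩ := exists_prime_eq_mul_sub_fifteen hN
  have : Fact p.Prime := ⟨hprime⟩
  have hp_odd : Odd (p : ℤ) := Int.odd_iff.2 (by omega)
  have hJ : J(-3 * N | p) = 1 := jacobiSym_neg_three_mul_eq_one hN hp6
    (Int.modEq_iff_dvd.2 ⟨-d, by rw [hpd]; ring⟩)
  have hNdvd : ¬(p : ℤ) ∣ N := fun hdvd ↦
    (Nat.le_of_dvd (by omega) (Int.natCast_dvd_natCast.1 hdvd)).not_gt hNp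
  have hNd : (N : ℤ) * d ≡ 5 * 3 [ZMOD p] := Int.modEq_iff_dvd.2 ⟨-1, by rw [hpd]; ring⟩
  obtain ⟨h₀, hdvd⟩ := exists_dvd_mul_sq_add_of_jacobiSym_eq_one hNd hNdvd hJ
  obtain ⟨h, hh, a, ha⟩ := exists_odd_dvd_mul_sq_add hp_odd hdvd
  have ha4 : a % 4 = 1 := emod_four_eq_one_of_mul_eq ha.symm hpd hp_odd hh (by omega)
  have ha5 : a % 5 = 3 := emod_five_eq_three_of_mul_eq ha.symm hpd (by omega) (by omega)
  have hcongr : IsCongruent (ankenyGram a h p N) !![5, 0, 0; 0, 8, 2; 0, 2, 8] :=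
    isCongruent_of_det_eq_300
      (posDef_ankenyGram ha.symm hpd (by exact_mod_cast hprime.pos) hd)
      (det_ankenyGram ha.symm hpd) (hasAdmissibleValues_ankenyGram ha4 ha5 (by omega))
  exact hcongr.symm.represents (represents_diag (ankenyGram a h p N) 2)

theorem exists_eq_of_emod_sixty_eq {N : ℕ} (hN : N % 60 = 17) :
    ∃ x y z : ℤ, (N : ℤ) = 5 * x ^ 2 + 8 * y ^ 2 + 4 * y * z + 8 * z ^ 2 := by
  obtain ⟨v, hv⟩ := represents_of_emod_sixty_eq hN
  refine ⟨v 0, v 1, v 2, ?_⟩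
  rw [← hv, dotProduct_mulVec_fin_three (.ext fun i j ↦ by fin_cases i <;> fin_cases j <;> rfl)]
  simp only [of_apply, cons_val', cons_val_fin_one, cons_val]
  ring

end Construction

section OddRepresentations

variable {Z Y : ℤ}

theorem even_three_mul_sq_add_five_mul_sq : Even (3 * Z ^ 2 + 5 * Y ^ 2) ↔ (Even Z ↔ Even Y) := by
  have hthree : ¬Even (3 : ℤ) := by decide
  have hfive : ¬Even (5 : ℤ) := by decide
  simp [Int.even_add, Int.even_mul, Int.even_pow, hthree, hfive]

theorem eight_dvd_three_mul_sq_add_five_mul_sq (hZ : Odd Z) (hY : Odd Y) :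
    8 ∣ 3 * Z ^ 2 + 5 * Y ^ 2 := by
  have hZ8 := Int.eight_dvd_sq_sub_one_of_odd hZ
  have hY8 := Int.eight_dvd_sq_sub_one_of_odd hY
  omega

theorem exists_odd_eq_four_mul (hZ : Odd Z) (hY : Odd Y) :
    ∃ Z' Y', Odd Z' ∧ Odd Y' ∧ 3 * Z' ^ 2 + 5 * Y' ^ 2 = 4 * (3 * Z ^ 2 + 5 * Y ^ 2) := by
  -- `3(Z ± 5Y)² + 5(3Z ∓ Y)² = 16(3Z² + 5Y²)`, and for one choice of sign `(Z ± 5Y) / 2` and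
  -- `(3Z ∓ Y) / 2` are odd.
  obtain ⟨i, rfl⟩ := hZ
  obtain ⟨j, rfl⟩ := hY
  rcases Int.even_or_odd (i + j) with hij | hij
  · exact ⟨i + 5 * j + 3, 3 * i - j + 1, by grind, by grind, by ring⟩
  · exact ⟨i - 5 * j - 2, 3 * i + j + 2, by grind, by grind, by ring⟩

theorem exists_odd_eq_four_mul_of_not_eight_dvd (heven : Even (3 * Z ^ 2 + 5 * Y ^ 2))
    (hdvd : ¬8 ∣ 3 * Z ^ 2 + 5 * Y ^ 2) :
    ∃ Z' Y', Odd Z' ∧ Odd Y' ∧ 3 * Z' ^ 2 + 5 * Y' ^ 2 = 4 * (3 * Z ^ 2 + 5 * Y ^ 2) := by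
  have hparity := even_three_mul_sq_add_five_mul_sq.1 heven
  have hZ : Even Z := by
    by_contra hZ
    exact hdvd (eight_dvd_three_mul_sq_add_five_mul_sq (Int.not_even_iff_odd.1 hZ)
      (Int.not_even_iff_odd.1 (mt hparity.2 hZ)))
  obtain ⟨u, rfl⟩ := even_iff_two_dvd.1 hZ
  obtain ⟨v, rfl⟩ := even_iff_two_dvd.1 (hparity.1 hZ)
  have huv : ¬(Even u ↔ Even v) := by
    rw [← even_three_mul_sq_add_five_mul_sq, even_iff_two_dvd]
    contrapose! hdvd
    obtain ⟨w, hw⟩ := hdvd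
    exact ⟨w, by linear_combination 4 * hw⟩
  exact ⟨u + 5 * v, 3 * u - v, by grind, by grind, by ring⟩

theorem exists_odd_of_eight_dvd (hpos : 0 < 3 * Z ^ 2 + 5 * Y ^ 2)
    (hdvd : 8 ∣ 3 * Z ^ 2 + 5 * Y ^ 2) :
    ∃ Z' Y', Odd Z' ∧ Odd Y' ∧ 3 * Z' ^ 2 + 5 * Y' ^ 2 = 3 * Z ^ 2 + 5 * Y ^ 2 := by
  induction hm : (3 * Z ^ 2 + 5 * Y ^ 2).toNat using Nat.strong_induction_on generalizing Z Y with
  | _ m ih =>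
  subst hm
  have hparity := even_three_mul_sq_add_five_mul_sq.1
    (even_iff_two_dvd.2 ((by norm_num : (2 : ℤ) ∣ 8).trans hdvd))
  by_cases hZ : Even Z
  case neg =>
    exact ⟨Z, Y, Int.not_even_iff_odd.1 hZ, Int.not_even_iff_odd.1 (mt hparity.2 hZ), rfl⟩
  obtain ⟨i, rfl⟩ := even_iff_two_dvd.1 hZ
  obtain ⟨j, rfl⟩ := even_iff_two_dvd.1 (hparity.1 hZ)
  have hquarter : 3 * (2 * i) ^ 2 + 5 * (2 * j) ^ 2 = 4 * (3 * i ^ 2 + 5 * j ^ 2) := by ring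
  rw [hquarter] at hpos hdvd ih ⊢
  by_cases hij : 8 ∣ 3 * i ^ 2 + 5 * j ^ 2
  · obtain ⟨Z, Y, hZ, hY, heq⟩ := ih _ (by omega) (by omega) hij rfl
    rw [← heq]
    exact exists_odd_eq_four_mul hZ hY
  · exact exists_odd_eq_four_mul_of_not_eight_dvd (even_iff_two_dvd.2 (by omega)) hij

theorem exists_odd_eq_of_emod_eight_eq {N x y z : ℤ} (hN8 : N % 8 = 5) (hN5 : N % 5 ≠ 0)
    (hxyz : N = 5 * x ^ 2 + 8 * y ^ 2 + 4 * y * z + 8 * z ^ 2) :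
    ∃ W Y Z, Odd W ∧ Odd Y ∧ Odd Z ∧ N = 5 * W ^ 2 + 5 * Y ^ 2 + 3 * Z ^ 2 := by
  have hsplit : N - 5 * x ^ 2 = 3 * (y - z) ^ 2 + 5 * (y + z) ^ 2 := by
    rw [hxyz]
    ring
  have hx : Odd x := by
    by_contra hx
    obtain ⟨k, rfl⟩ := even_iff_two_dvd.1 (Int.not_odd_iff_even.1 hx)
    ring_nf at hxyz
    omega
  have hx8 := Int.eight_dvd_sq_sub_one_of_odd hx
  have hne : 3 * (y - z) ^ 2 + 5 * (y + z) ^ 2 ≠ 0 := by omega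
  obtain ⟨Z, Y, hZ, hY, heq⟩ := exists_odd_of_eight_dvd
    (lt_of_le_of_ne (by positivity) hne.symm) (by omega)
  exact ⟨x, Y, Z, hx, hY, hZ, by linarith⟩

end OddRepresentations

section PolygonalNumbers

theorem eight_mul_p3_add_one (x : ℤ) : 8 * p3 x + 1 = (2 * x + 1) ^ 2 := by
  obtain ⟨k, hk⟩ := (Int.even_mul_succ_self x).two_dvd
  have htwo : 2 * p3 x = x ^ 2 + x := Int.mul_ediv_cancel' ⟨k, by linear_combination hk⟩
  linear_combination 4 * htwo

theorem twenty_four_mul_p5_add_one (y : ℤ) : 24 * p5 y + 1 = (6 * y - 1) ^ 2 := by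
  obtain ⟨k, hk⟩ := (Int.even_mul_pred_self y).two_dvd
  have htwo : 2 * p5 y = 3 * y ^ 2 - y :=
    Int.mul_ediv_cancel' ⟨k + y ^ 2, by linear_combination hk⟩
  linear_combination 12 * htwo

theorem forty_mul_p7_add_nine (z : ℤ) : 40 * p7 z + 9 = (10 * z - 3) ^ 2 := by
  obtain ⟨k, hk⟩ := (Int.even_mul_pred_self z).two_dvd
  have htwo : 2 * p7 z = 5 * z ^ 2 - 3 * z :=
    Int.mul_ediv_cancel' ⟨k + 2 * z ^ 2 - z, by linear_combination hk⟩
  linear_combination 20 * htwo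

theorem exists_eight_mul_p3_add_one_eq_sq {X : ℤ} (hX : Odd X) : ∃ x, 8 * p3 x + 1 = X ^ 2 := by
  obtain ⟨x, rfl⟩ := hX
  exact ⟨x, eight_mul_p3_add_one x⟩

theorem exists_twenty_four_mul_p5_add_one_eq_sq {W : ℤ} (hW : Odd W) (hW3 : W % 3 ≠ 0) :
    ∃ y, 24 * p5 y + 1 = W ^ 2 := by
  rw [Int.odd_iff] at hW
  obtain ⟨y, hy | hy⟩ : ∃ y, W = 6 * y - 1 ∨ W = -(6 * y - 1) := by
    rcases (by omega : W % 6 = 5 ∨ W % 6 = 1) with h | h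
    · exact ⟨(W + 1) / 6, by omega⟩
    · exact ⟨(1 - W) / 6, by omega⟩
  · exact ⟨y, by rw [hy, twenty_four_mul_p5_add_one]⟩
  · exact ⟨y, by rw [hy, neg_sq, twenty_four_mul_p5_add_one]⟩

theorem exists_forty_mul_p7_add_nine_eq_sq {Z : ℤ} (hZ : Odd Z) (hZ5 : Z ^ 2 % 5 = 4) :
    ∃ z, 40 * p7 z + 9 = Z ^ 2 := by
  rw [Int.odd_iff] at hZ
  obtain ⟨z, hz | hz⟩ : ∃ z, Z = 10 * z - 3 ∨ Z = -(10 * z - 3) := by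
    have := sq_emod_five Z
    rcases (by omega : Z % 10 = 7 ∨ Z % 10 = 3) with h | h
    · exact ⟨(Z + 3) / 10, by omega⟩
    · exact ⟨(3 - Z) / 10, by omega⟩
  · exact ⟨z, by rw [hz, forty_mul_p7_add_nine]⟩
  · exact ⟨z, by rw [hz, neg_sq, forty_mul_p7_add_nine]⟩

theorem exists_eq_three_p3_add_p5_add_p7_of_odd {n W Y Z : ℤ} (hW : Odd W) (hY : Odd Y)
    (hZ : Odd Z) (h : 120 * n + 77 = 5 * W ^ 2 + 5 * Y ^ 2 + 3 * Z ^ 2) :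
    ∃ x y z : ℤ, n = 3 * p3 x + p5 y + p7 z := by
  wlog hWY : W % 3 = 0 ∧ Y % 3 ≠ 0 generalizing W Y
  · have hWsq := sq_emod_three W
    have hYsq := sq_emod_three Y
    exact this hY hW (by linarith) (by omega)
  obtain ⟨hW3, hY3⟩ := hWY
  have hZ5 : Z ^ 2 % 5 = 4 := by omega
  obtain ⟨X, rfl⟩ := Int.dvd_of_emod_eq_zero hW3
  obtain ⟨x, hx⟩ := exists_eight_mul_p3_add_one_eq_sq (Int.odd_mul.1 hW).2
  obtain ⟨y, hy⟩ := exists_twenty_four_mul_p5_add_one_eq_sq hY hY3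
  obtain ⟨z, hz⟩ := exists_forty_mul_p7_add_nine_eq_sq hZ hZ5
  exact ⟨x, y, z, by linarith⟩

end PolygonalNumbers

theorem three_p3_add_p5_add_p7_universal (n : ℕ) :
    ∃ x y z : ℤ, (n : ℤ) = 3 * p3 x + p5 y + p7 z := by
  obtain ⟨x, y, z, h⟩ := exists_eq_of_emod_sixty_eq (N := 120 * n + 77) (by omega)
  push_cast at h
  obtain ⟨W, Y, Z, hW, hY, hZ, hN⟩ := exists_odd_eq_of_emod_eight_eq (by omega) (by omega) h
  exact exists_eq_three_p3_add_p5_add_p7_of_odd hW hY hZ hN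
end

section
/- For every nonnegative integer n, there exist integers x, y, z, each relatively prime to 6, such that 24n + 5 = x² + y² + 3z². -/
/-!
A number `m` prime to `3` is represented by some positive ternary form of determinant `3`:
Dirichlet's theorem supplies a prime `p = 4mk - 3` with `k ≡ 1 [MOD 12]`, and quadratic reciprocity
makes `-k` a square mod `p`, which is what is needed to write such a form down with `m` on the
diagonal. Among the equivalent forms, one with minimal `a` and then minimal leading minor satisfies
`27 a³ ≤ 64 · 3`, so `a = 1` and a square splits off, leaving a positive binary form of determinant
`3`. Hence `m` is represented by `x² + y² + 3z²` or by `x² + 2(y² + yz + z²)`, and the second one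
avoids the class of `5` mod `8`.

The identity `(z + 2w)² + 3z² = (w + 2z)² + 3w²`, applied to two of the three variables, then
trades a representation `m = x² + y² + 3z²` for one with `x`, `y`, `z` odd and prime to `3`.
-/

/-- The integral binary quadratic form `a x² + 2b xy + c y²`, with even middle coefficient as in
Gauss, so that the form has an integral Gram matrix. -/
@[ext]
structure BinaryForm where
  a : ℤ
  b : ℤ
  c : ℤ

namespace BinaryForm

/-- The value of the form at an integral vector. -/
def eval (F : BinaryForm) (x y : ℤ) : ℤ :=
  F.a * x ^ 2 + 2 * F.b * x * y + F.c * y ^ 2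

/-- `F` represents `v` if `v` is a value of `F`; the zero vector is allowed. -/
def Represents (F : BinaryForm) (v : ℤ) : Prop :=
  ∃ x y : ℤ, F.eval x y = v

/-- The determinant of the Gram matrix of the form. -/
def det (F : BinaryForm) : ℤ :=
  F.a * F.c - F.b ^ 2

/-- Positive definiteness, encoded by Sylvester's criterion. -/
structure IsPositive (F : BinaryForm) : Prop where
  a_pos : 0 < F.a
  det_pos : 0 < F.det

/-- Reducedness in the sense of Lagrange and Gauss, without a normalization of the sign of `b`. -/
structure IsReduced (F : BinaryForm) : Prop where
  abs_two_mul_b_le : |2 * F.b| ≤ F.a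
  a_le_c : F.a ≤ F.c

/-- The form obtained by substituting `x + k y` for `x`. -/
def shear (F : BinaryForm) (k : ℤ) : BinaryForm :=
  ⟨F.a, F.b + k * F.a, F.c + 2 * k * F.b + k ^ 2 * F.a⟩

/-- The form obtained by exchanging the two variables. -/
def swap (F : BinaryForm) : BinaryForm :=
  ⟨F.c, F.b, F.a⟩

variable {F : BinaryForm} {v : ℤ}

theorem det_shear (F : BinaryForm) (k : ℤ) : (F.shear k).det = F.det := by
  simp only [det, shear]
  ring

theorem det_swap (F : BinaryForm) : F.swap.det = F.det := by
  simp only [det, swap]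
  ring

theorem Represents.shear (h : F.Represents v) (k : ℤ) : (F.shear k).Represents v := by
  obtain ⟨x, y, rfl⟩ := h
  refine ⟨x - k * y, y, ?_⟩
  simp only [eval, BinaryForm.shear]
  ring

theorem Represents.swap (h : F.Represents v) : F.swap.Represents v := by
  obtain ⟨x, y, rfl⟩ := h
  refine ⟨y, x, ?_⟩
  simp only [eval, BinaryForm.swap]
  ring

theorem IsPositive.c_pos (h : F.IsPositive) : 0 < F.c := by
  have hdet : F.a * F.c = F.det + F.b ^ 2 := by
    simp only [det]
    ring
  have hac : 0 < F.a * F.c := hdet ▸ add_pos_of_pos_of_nonneg h.det_pos (sq_nonneg F.b)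
  exact pos_of_mul_pos_right hac h.a_pos.le

theorem IsPositive.shear (h : F.IsPositive) (k : ℤ) : (F.shear k).IsPositive :=
  ⟨h.a_pos, (det_shear F k).symm ▸ h.det_pos⟩

theorem IsPositive.swap (h : F.IsPositive) : F.swap.IsPositive :=
  ⟨h.c_pos, (det_swap F).symm ▸ h.det_pos⟩

theorem exists_abs_two_mul_shear_b_le (ha : 0 < F.a) : ∃ k : ℤ, |2 * (F.shear k).b| ≤ F.a := by
  refine ⟨-((2 * F.b + F.a) / (2 * F.a)), ?_⟩
  have hle := Int.ediv_mul_le (2 * F.b + F.a) (b := 2 * F.a) (by lia)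
  have hlt := Int.lt_ediv_add_one_mul_self (2 * F.b + F.a) (b := 2 * F.a) (by lia)
  rw [abs_le]
  constructor <;> simp only [BinaryForm.shear] <;> linarith

theorem IsReduced.three_mul_sq_a_le (h : F.IsReduced) : 3 * F.a ^ 2 ≤ 4 * F.det := by
  have ha : 0 ≤ F.a := (abs_nonneg _).trans h.abs_two_mul_b_le
  have hb : (2 * F.b) ^ 2 ≤ F.a ^ 2 := sq_le_sq.2 (h.abs_two_mul_b_le.trans (le_abs_self _))
  have hac : F.a ^ 2 ≤ F.a * F.c := by
    rw [sq]
    exact mul_le_mul_of_nonneg_left h.a_le_c ha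
  simp only [det]
  linarith

theorem IsPositive.exists_isReduced (hF : F.IsPositive) (hv : F.Represents v) :
    ∃ G : BinaryForm, G.IsReduced ∧ G.IsPositive ∧ G.det = F.det ∧ G.Represents v := by
  obtain ⟨G, ⟨hG, hdet, hGv⟩, hmin⟩ := exists_minimalFor_of_wellFoundedLT
    (fun G : BinaryForm ↦ G.IsPositive ∧ G.det = F.det ∧ G.Represents v) (fun G ↦ G.a.toNat)
    ⟨F, hF, rfl, hv⟩
  obtain ⟨k, hk⟩ := exists_abs_two_mul_shear_b_le hG.a_pos
  have hdet' : (G.shear k).det = F.det := (det_shear G k).trans hdet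
  refine ⟨G.shear k, ⟨hk, ?_⟩, hG.shear k, hdet', hGv.shear k⟩
  by_contra! hlt
  have hlt' : (G.shear k).swap.a.toNat < G.a.toNat := (Int.toNat_lt_toNat hG.a_pos).2 hlt
  exact hlt'.not_ge (hmin ⟨(hG.shear k).swap, (det_swap _).trans hdet', (hGv.shear k).swap⟩ hlt'.le)

theorem IsReduced.eq_of_det_eq_three (h : F.IsReduced) (ha : 0 < F.a) (hdet : F.det = 3) :
    F = ⟨1, 0, 3⟩ ∨ F = ⟨2, 1, 2⟩ ∨ F = ⟨2, -1, 2⟩ := by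
  have ha2 : F.a ≤ 2 := by nlinarith [h.three_mul_sq_a_le]
  have hb := h.abs_two_mul_b_le
  have hbl : -1 ≤ F.b := by grind
  have hbu : F.b ≤ 1 := by grind
  obtain ⟨a, b, c⟩ := F
  simp only [det, mk.injEq] at *
  interval_cases a <;> interval_cases b <;> grind

theorem represents_of_det_eq_three (hF : F.IsPositive) (hdet : F.det = 3) (hv : F.Represents v) :
    (∃ y z : ℤ, v = y ^ 2 + 3 * z ^ 2) ∨ ∃ y z : ℤ, v = 2 * (y ^ 2 + y * z + z ^ 2) := by
  obtain ⟨G, hred, hG, hGdet, y, z, rfl⟩ := hF.exists_isReduced hv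
  rcases hred.eq_of_det_eq_three hG.a_pos (hGdet.trans hdet) with rfl | rfl | rfl
  · exact .inl ⟨y, z, by simp only [eval]; ring⟩
  · exact .inr ⟨y, z, by simp only [eval]; ring⟩
  · exact .inr ⟨y, -z, by simp only [eval]; ring⟩

end BinaryForm

/-- The integral ternary quadratic form `a x² + b y² + c z² + 2d yz + 2e xz + 2f xy`, with even
mixed coefficients, so that the form has an integral Gram matrix. -/
structure TernaryForm where
  a : ℤ
  b : ℤ
  c : ℤ
  d : ℤ
  e : ℤ
  f : ℤ

namespace TernaryForm

/-- The value of the form at an integral vector. -/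
def eval (F : TernaryForm) (x y z : ℤ) : ℤ :=
  F.a * x ^ 2 + F.b * y ^ 2 + F.c * z ^ 2 + 2 * F.d * y * z + 2 * F.e * x * z + 2 * F.f * x * y

/-- `F` represents `v` if `v` is a value of `F`; the zero vector is allowed. -/
def Represents (F : TernaryForm) (v : ℤ) : Prop :=
  ∃ x y z : ℤ, F.eval x y z = v

/-- The determinant of the Gram matrix of the form. -/
def det (F : TernaryForm) : ℤ :=
  F.a * F.b * F.c + 2 * F.d * F.e * F.f - F.a * F.d ^ 2 - F.b * F.e ^ 2 - F.c * F.f ^ 2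

/-- The restriction of the form to the plane `z = 0`. -/
def leading (F : TernaryForm) : BinaryForm :=
  ⟨F.a, F.f, F.b⟩

/-- The Schur complement of `F.a`, multiplied by `F.a` to make it integral: the form in `y`, `z`
left over when the square is completed in `a F = (a x + f y + e z)² + ⋯`. -/
def schur (F : TernaryForm) : BinaryForm :=
  ⟨F.a * F.b - F.f ^ 2, F.a * F.d - F.e * F.f, F.a * F.c - F.e ^ 2⟩

/-- Positive definiteness, encoded by Sylvester's criterion. -/
structure IsPositive (F : TernaryForm) : Prop where
  leading : F.leading.IsPositive
  det_pos : 0 < F.det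

/-- Reducedness in the sense of Gauss, imposed on the leading binary form and on the Schur
complement. It bounds `a` in terms of the determinant. -/
structure IsReduced (F : TernaryForm) : Prop where
  leading : F.leading.IsReduced
  schur : F.schur.IsReduced

/-- The form obtained by substituting `x + k y` for `x`. -/
def shearXY (F : TernaryForm) (k : ℤ) : TernaryForm :=
  ⟨F.a, F.b + 2 * k * F.f + k ^ 2 * F.a, F.c, F.d + k * F.e, F.e, F.f + k * F.a⟩

/-- The form obtained by substituting `y + k z` for `y`. -/
def shearYZ (F : TernaryForm) (k : ℤ) : TernaryForm :=
  ⟨F.a, F.b, F.c + 2 * k * F.d + k ^ 2 * F.b, F.d + k * F.b, F.e + k * F.f, F.f⟩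

/-- The form obtained by exchanging `x` and `y`. -/
def swapXY (F : TernaryForm) : TernaryForm :=
  ⟨F.b, F.a, F.c, F.e, F.d, F.f⟩

/-- The form obtained by exchanging `y` and `z`. -/
def swapYZ (F : TernaryForm) : TernaryForm :=
  ⟨F.a, F.c, F.b, F.d, F.f, F.e⟩

variable {F : TernaryForm} {v : ℤ}

theorem det_schur (F : TernaryForm) : F.schur.det = F.a * F.det := by
  simp only [BinaryForm.det, schur, det]
  ring

theorem IsPositive.schur (h : F.IsPositive) : F.schur.IsPositive :=
  ⟨h.leading.det_pos, (det_schur F).symm ▸ mul_pos h.leading.a_pos h.det_pos⟩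

theorem schur_shearXY (F : TernaryForm) (k : ℤ) : (F.shearXY k).schur = F.schur := by
  ext <;> simp only [schur, shearXY] <;> ring

theorem schur_shearYZ (F : TernaryForm) (k : ℤ) : (F.shearYZ k).schur = F.schur.shear k := by
  ext <;> simp only [schur, shearYZ, BinaryForm.shear] <;> ring

theorem det_shearXY (F : TernaryForm) (k : ℤ) : (F.shearXY k).det = F.det := by
  simp only [det, shearXY]
  ring

theorem det_shearYZ (F : TernaryForm) (k : ℤ) : (F.shearYZ k).det = F.det := by
  simp only [det, shearYZ]
  ring

theorem det_swapXY (F : TernaryForm) : F.swapXY.det = F.det := by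
  simp only [det, swapXY]
  ring

theorem det_swapYZ (F : TernaryForm) : F.swapYZ.det = F.det := by
  simp only [det, swapYZ]
  ring

theorem Represents.shearXY (h : F.Represents v) (k : ℤ) : (F.shearXY k).Represents v := by
  obtain ⟨x, y, z, rfl⟩ := h
  refine ⟨x - k * y, y, z, ?_⟩
  simp only [eval, TernaryForm.shearXY]
  ring

theorem Represents.shearYZ (h : F.Represents v) (k : ℤ) : (F.shearYZ k).Represents v := by
  obtain ⟨x, y, z, rfl⟩ := h
  refine ⟨x, y - k * z, z, ?_⟩
  simp only [eval, TernaryForm.shearYZ]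
  ring

theorem Represents.swapXY (h : F.Represents v) : F.swapXY.Represents v := by
  obtain ⟨x, y, z, rfl⟩ := h
  refine ⟨y, x, z, ?_⟩
  simp only [eval, TernaryForm.swapXY]
  ring

theorem Represents.swapYZ (h : F.Represents v) : F.swapYZ.Represents v := by
  obtain ⟨x, y, z, rfl⟩ := h
  refine ⟨x, z, y, ?_⟩
  simp only [eval, TernaryForm.swapYZ]
  ring

theorem IsPositive.shearXY (h : F.IsPositive) (k : ℤ) : (F.shearXY k).IsPositive :=
  ⟨h.leading.shear k, (det_shearXY F k).symm ▸ h.det_pos⟩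

theorem IsPositive.shearYZ (h : F.IsPositive) (k : ℤ) : (F.shearYZ k).IsPositive :=
  ⟨h.leading, (det_shearYZ F k).symm ▸ h.det_pos⟩

theorem IsPositive.swapXY (h : F.IsPositive) : F.swapXY.IsPositive :=
  ⟨h.leading.swap, (det_swapXY F).symm ▸ h.det_pos⟩

theorem IsPositive.swapYZ (h : F.IsPositive) : F.swapYZ.IsPositive :=
  ⟨⟨h.leading.a_pos, h.schur.c_pos⟩, (det_swapYZ F).symm ▸ h.det_pos⟩

theorem IsPositive.exists_abs_two_mul_b_le (hF : F.IsPositive) (hv : F.Represents v) :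
    ∃ G : TernaryForm, (G.IsPositive ∧ G.det = F.det ∧ G.Represents v) ∧
      (G.a = F.a ∧ G.schur.a = F.schur.a) ∧
        |2 * G.leading.b| ≤ G.leading.a ∧ |2 * G.schur.b| ≤ G.schur.a := by
  obtain ⟨k, hk⟩ := BinaryForm.exists_abs_two_mul_shear_b_le hF.schur.a_pos
  obtain ⟨l, hl⟩ := BinaryForm.exists_abs_two_mul_shear_b_le hF.leading.a_pos
  have hschur : ((F.shearYZ k).shearXY l).schur = F.schur.shear k := by
    rw [schur_shearXY, schur_shearYZ]
  refine ⟨(F.shearYZ k).shearXY l, ⟨(hF.shearYZ k).shearXY l, ?_, (hv.shearYZ k).shearXY l⟩,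
    ⟨rfl, ?_⟩, hl, ?_⟩
  · rw [det_shearXY, det_shearYZ]
  · rw [hschur, BinaryForm.shear]
  · rwa [hschur]

theorem IsPositive.exists_isReduced (hF : F.IsPositive) (hv : F.Represents v) :
    ∃ G : TernaryForm, G.IsReduced ∧ G.IsPositive ∧ G.det = F.det ∧ G.Represents v := by
  obtain ⟨G, ⟨hG, hGdet, hGv⟩, hmin⟩ := exists_minimalFor_of_wellFoundedLT
    (fun G : TernaryForm ↦ G.IsPositive ∧ G.det = F.det ∧ G.Represents v)
    (fun G ↦ toLex (G.a.toNat, G.schur.a.toNat)) ⟨F, hF, rfl, hv⟩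
  obtain ⟨H, ⟨hH, hHdet, hHv⟩, ⟨ha, hA⟩, hleading, hschur⟩ := hG.exists_abs_two_mul_b_le hGv
  have hnot : ∀ J : TernaryForm, J.IsPositive → J.det = H.det → J.Represents v →
      ¬ (J.a.toNat < H.a.toNat ∨ J.a.toNat = H.a.toNat ∧ J.schur.a.toNat < H.schur.a.toNat) := by
    intro J hJ hJdet hJv hlt
    have hJG : toLex (J.a.toNat, J.schur.a.toNat) < toLex (G.a.toNat, G.schur.a.toNat) := by
      rwa [Prod.Lex.toLex_lt_toLex, ← ha, ← hA]
    exact hJG.not_ge (hmin ⟨hJ, hJdet.trans (hHdet.trans hGdet), hJv⟩ hJG.le)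
  have hac : H.leading.a ≤ H.leading.c := by
    by_contra! hlt
    exact hnot H.swapXY hH.swapXY (det_swapXY H) hHv.swapXY
      (.inl ((Int.toNat_lt_toNat hH.leading.a_pos).2 hlt))
  have hAC : H.schur.a ≤ H.schur.c := by
    by_contra! hlt
    exact hnot H.swapYZ hH.swapYZ (det_swapYZ H) hHv.swapYZ
      (.inr ⟨rfl, (Int.toNat_lt_toNat hH.schur.a_pos).2 hlt⟩)
  exact ⟨H, ⟨⟨hleading, hac⟩, hschur, hAC⟩, hH, hHdet.trans hGdet, hHv⟩

theorem IsReduced.pow_three_a_le (h : F.IsReduced) (ha : 0 < F.a) :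
    27 * F.a ^ 3 ≤ 64 * F.det := by
  have hleading : 3 * F.a ^ 2 ≤ 4 * F.schur.a := h.leading.three_mul_sq_a_le
  have hschur : 3 * F.schur.a ^ 2 ≤ 4 * (F.a * F.det) :=
    det_schur F ▸ h.schur.three_mul_sq_a_le
  have hsq : (3 * F.a ^ 2) ^ 2 ≤ (4 * F.schur.a) ^ 2 := pow_le_pow_left₀ (by positivity) hleading 2
  refine le_of_mul_le_mul_left ?_ ha
  linarith

theorem Represents.exists_schur_represents (h : F.Represents v) (ha : F.a = 1) :
    ∃ x : ℤ, F.schur.Represents (v - x ^ 2) := by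
  obtain ⟨x, y, z, rfl⟩ := h
  refine ⟨x + F.f * y + F.e * z, y, z, ?_⟩
  simp only [BinaryForm.eval, schur, eval, ha]
  ring

theorem represents_of_det_eq_three (hF : F.IsPositive) (hdet : F.det = 3) (hv : F.Represents v) :
    (∃ x y z : ℤ, v = x ^ 2 + y ^ 2 + 3 * z ^ 2) ∨
      ∃ x y z : ℤ, v = x ^ 2 + 2 * (y ^ 2 + y * z + z ^ 2) := by
  obtain ⟨G, hred, hG, hGdet, hGv⟩ := hF.exists_isReduced hv
  have hpos : 0 < G.a := hG.leading.a_pos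
  have ha : G.a = 1 := by
    have hle := hred.pow_three_a_le hpos
    by_contra hne
    have hpow : 2 ^ 3 ≤ G.a ^ 3 := pow_le_pow_left₀ (by norm_num) (by lia) 3
    lia
  have hschur : G.schur.det = 3 := by rw [det_schur, ha, hGdet, hdet, one_mul]
  obtain ⟨x, hx⟩ := hGv.exists_schur_represents ha
  rcases BinaryForm.represents_of_det_eq_three hG.schur hschur hx with ⟨y, z, h⟩ | ⟨y, z, h⟩
  · exact .inl ⟨x, y, z, by linarith⟩
  · exact .inr ⟨x, y, z, by linarith⟩

end TernaryForm

theorem exists_prime_add_three_eq_four_mul {m : ℕ} (hm : ¬ 3 ∣ m) :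
    ∃ p k : ℕ, p.Prime ∧ k % 12 = 1 ∧ p + 3 = 4 * m * k := by
  obtain ⟨r, hr⟩ : ∃ r, r + 3 = 4 * m := ⟨4 * m - 3, by lia⟩
  have h3 : r.Coprime 3 := ((Nat.Prime.coprime_iff_not_dvd Nat.prime_three).2 (by lia)).symm
  have h4m : r.Coprime (4 * m) := by
    rw [← hr]
    simpa using h3
  have h12 : r.Coprime (12 * (4 * m)) :=
    ((h4m.coprime_dvd_right ⟨m, rfl⟩).mul_right h3).mul_right h4m
  obtain ⟨p, hlt, hp, hmod⟩ := Nat.forall_exists_prime_gt_and_modEq r (by lia) h12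
  obtain ⟨t, ht⟩ := (Nat.modEq_iff_dvd' hlt.le).1 hmod.symm
  refine ⟨p, 12 * t + 1, hp, by lia, ?_⟩
  calc p + 3 = (p - r) + (r + 3) := by lia
    _ = 4 * m * (12 * t + 1) := by rw [ht, hr]; ring

open scoped NumberTheorySymbols in
theorem jacobiSym_neg_three_of_mod_twelve_eq_one {k : ℕ} (hk : k % 12 = 1) : J(-3 | k) = 1 := by
  have hrec : J(3 | k) = J(k | 3) :=
    jacobiSym.quadratic_reciprocity_one_mod_four' (a := 3) (by decide) (by lia)
  rw [jacobiSym.neg _ (Nat.odd_iff.2 (by lia)), ZMod.χ₄_nat_one_mod_four (by lia), one_mul, hrec,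
    jacobiSym.mod_left, show (k : ℤ) % (3 : ℕ) = 1 by lia, jacobiSym.one_left]

open scoped NumberTheorySymbols in
theorem isSquare_neg_of_dvd_add_three {p k : ℕ} [Fact p.Prime] (hp : p % 4 = 1)
    (hk : k % 12 = 1) (hdvd : k ∣ p + 3) : IsSquare ((-k : ℤ) : ZMod p) := by
  have hpk : (p : ℤ) % k = -3 % k := by
    refine ((Int.modEq_iff_dvd).2 ?_).symm
    simpa using Int.natCast_dvd_natCast.2 hdvd
  apply ZMod.isSquare_of_jacobiSym_eq_one
  calc J(-k | p) = J(k | p) := by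
        rw [jacobiSym.neg _ (Nat.odd_iff.2 (by lia)), ZMod.χ₄_nat_one_mod_four hp, one_mul]
    _ = J(p | k) := jacobiSym.quadratic_reciprocity_one_mod_four' (Nat.odd_iff.2 (by lia)) hp
    _ = J(-3 | k) := jacobiSym.mod_left' hpk
    _ = 1 := jacobiSym_neg_three_of_mod_twelve_eq_one hk

theorem exists_ternaryForm_det_eq_three {m : ℕ} (hm : ¬ 3 ∣ m) :
    ∃ F : TernaryForm, F.IsPositive ∧ F.det = 3 ∧ F.Represents m := by
  obtain ⟨p, k, hp, hk, hpk⟩ := exists_prime_add_three_eq_four_mul hm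
  have : Fact p.Prime := ⟨hp⟩
  have hp4 : p % 4 = 1 := by
    rw [mul_assoc] at hpk
    lia
  obtain ⟨r, hr⟩ := isSquare_neg_of_dvd_add_three hp4 hk ⟨4 * m, by rw [hpk]; ring⟩
  obtain ⟨s, rfl⟩ := ZMod.intCast_surjective r
  obtain ⟨q, hq⟩ : (p : ℤ) ∣ s * s - -k := by
    rwa [← Int.cast_mul, ZMod.intCast_eq_intCast_iff_dvd_sub] at hr
  have hpos : (0 : ℤ) < p := mod_cast hp.pos
  have hqpos : 0 < q := by
    have hpq : 0 < (p : ℤ) * q := by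
      rw [← hq, sub_neg_eq_add]
      exact add_pos_of_nonneg_of_pos (mul_self_nonneg s) (by lia)
    exact pos_of_mul_pos_right hpq hpos.le
  have hminor : 4 * q * p - (2 * s) ^ 2 = 4 * k := by linear_combination -4 * hq
  -- As `s² + k = q p`, the determinant is `m (4 q p - (2 s)²) - p = 4 m k - p = 3`.
  let F : TernaryForm := ⟨4 * q, p, m, 0, 1, 2 * s⟩
  have hdet : F.det = 3 := by
    have hpkm : (p : ℤ) + 3 = 4 * m * k := mod_cast hpk
    simp only [TernaryForm.det, F]
    linear_combination (m : ℤ) * hminor - hpkm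
  refine ⟨F, ⟨⟨?_, ?_⟩, by lia⟩, hdet, 0, 0, 1, by simp [TernaryForm.eval, F]⟩
  · simp only [TernaryForm.leading, F]
    lia
  · simp only [TernaryForm.leading, BinaryForm.det, F]
    lia

theorem sq_add_two_mul_emod_eight_ne_five (x y z : ℤ) :
    (x ^ 2 + 2 * (y ^ 2 + y * z + z ^ 2)) % 8 ≠ 5 := by
  have key : ∀ x y z : ZMod 8, x ^ 2 + 2 * (y ^ 2 + y * z + z ^ 2) ≠ 5 := by decide
  intro h
  apply key x y z
  exact_mod_cast (ZMod.intCast_eq_intCast_iff _ 5 8).2 h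

theorem exists_eq_sq_add_sq_add_three_mul_sq {m : ℕ} (h3 : ¬ 3 ∣ m) (h8 : m % 8 = 5) :
    ∃ x y z : ℤ, (m : ℤ) = x ^ 2 + y ^ 2 + 3 * z ^ 2 := by
  obtain ⟨F, hF, hdet, hv⟩ := exists_ternaryForm_det_eq_three h3
  refine (TernaryForm.represents_of_det_eq_three hF hdet hv).resolve_right ?_
  rintro ⟨x, y, z, h⟩
  exact sq_add_two_mul_emod_eight_ne_five x y z (by lia)

theorem exists_odd_sq_add_three_mul_sq_eq {y z : ℤ} (h : (y - z) % 4 = 2) :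
    ∃ u w : ℤ, Odd u ∧ Odd w ∧ y = z + 2 * w ∧ y ^ 2 + 3 * z ^ 2 = u ^ 2 + 3 * w ^ 2 := by
  obtain ⟨w, rfl⟩ : ∃ w, y = z + 2 * w := ⟨(y - z) / 2, by lia⟩
  exact ⟨w + 2 * z, w, by grind, by grind, rfl, by ring⟩

theorem even_sq_add_three_mul_sq {y z : ℤ} : Even (y ^ 2 + 3 * z ^ 2) ↔ (Even y ↔ Even z) := by
  simp [parity_simps, show ¬ Even (3 : ℤ) by decide]

theorem exists_odd_sq_add_three_mul_sq_eq_of_emod_eight {y z : ℤ}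
    (h : (y ^ 2 + 3 * z ^ 2) % 8 = 4) :
    ∃ u w : ℤ, Odd u ∧ Odd w ∧ y ^ 2 + 3 * z ^ 2 = u ^ 2 + 3 * w ^ 2 := by
  have hparity : Even y ↔ Even z := even_sq_add_three_mul_sq.1 (Int.even_iff.2 (by lia))
  by_cases hz : Even z
  · obtain ⟨s, rfl⟩ := hz.two_dvd
    obtain ⟨r, rfl⟩ := (hparity.2 hz).two_dvd
    have hodd : ¬ Even (r ^ 2 + 3 * s ^ 2) := by
      rw [Int.even_iff]
      ring_nf at h ⊢
      lia
    have hsub : ¬ Even (r - s) := by rwa [Int.even_sub, ← even_sq_add_three_mul_sq]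
    rw [Int.even_iff] at hsub
    obtain ⟨u, w, hu, hw, -, heq⟩ :=
      exists_odd_sq_add_three_mul_sq_eq (y := 2 * r) (z := 2 * s) (by lia)
    exact ⟨u, w, hu, hw, heq⟩
  · exact ⟨y, z, by grind, by grind, rfl⟩

theorem exists_odd_not_three_dvd_sq_add_three_mul_sq_eq {y z : ℤ} (hy : Odd y) (hz : Odd z)
    (hy3 : ¬ 3 ∣ y) :
    ∃ u w : ℤ, Odd u ∧ Odd w ∧ ¬ 3 ∣ w ∧ y ^ 2 + 3 * z ^ 2 = u ^ 2 + 3 * w ^ 2 := by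
  by_cases hz3 : 3 ∣ z
  · wlog hsub : (y - z) % 4 = 2 generalizing z
    · rw [← neg_sq z]
      have hy2 := Int.odd_iff.1 hy
      have hz2 := Int.odd_iff.1 hz
      exact this hz.neg (by simpa using hz3) (by lia)
    obtain ⟨u, w, hu, hw, hyzw, heq⟩ := exists_odd_sq_add_three_mul_sq_eq hsub
    exact ⟨u, w, hu, hw, by lia, heq⟩
  · exact ⟨y, z, hy, hz, hz3, rfl⟩

theorem exists_odd_eq_sq_add_sq_add_three_mul_sq {m : ℕ} (h3 : ¬ 3 ∣ m) (h8 : m % 8 = 5) :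
    ∃ x y z : ℤ, Odd x ∧ Odd y ∧ Odd z ∧ (m : ℤ) = x ^ 2 + y ^ 2 + 3 * z ^ 2 := by
  obtain ⟨x, y, z, h⟩ := exists_eq_sq_add_sq_add_three_mul_sq h3 h8
  wlog hx : Odd x generalizing x y
  · refine this y x (by rw [h]; ring) ?_
    by_contra hy
    obtain ⟨r, rfl⟩ := (Int.not_odd_iff_even.1 hx).two_dvd
    obtain ⟨s, rfl⟩ := (Int.not_odd_iff_even.1 hy).two_dvd
    rcases Int.even_or_odd' z with ⟨t, rfl | rfl⟩ <;> ring_nf at h <;> lia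
  have hx8 := Int.eight_dvd_sq_sub_one_of_odd hx
  obtain ⟨u, w, hu, hw, heq⟩ :=
    exists_odd_sq_add_three_mul_sq_eq_of_emod_eight (y := y) (z := z) (by lia)
  exact ⟨x, u, w, hx, hu, hw, by linarith⟩

theorem not_three_dvd_of_sq_add_sq_emod_three {x y : ℤ} (h : (x ^ 2 + y ^ 2) % 3 = 2) :
    ¬ 3 ∣ x ∧ ¬ 3 ∣ y := by
  have key : ∀ x y : ZMod 3, x ^ 2 + y ^ 2 = 2 → x ≠ 0 ∧ y ≠ 0 := by decide
  have hcast : (x : ZMod 3) ^ 2 + (y : ZMod 3) ^ 2 = 2 := by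
    exact_mod_cast (ZMod.intCast_eq_intCast_iff _ 2 3).2 h
  simpa only [ne_eq, ZMod.intCast_zmod_eq_zero_iff_dvd] using! key x y hcast

theorem gcd_six_eq_one_of_odd_of_not_three_dvd {x : ℤ} (h2 : Odd x) (h3 : ¬ 3 ∣ x) :
    Int.gcd x 6 = 1 := by
  rw [← Int.isCoprime_iff_gcd_eq_one, show (6 : ℤ) = 2 * 3 by norm_num]
  exact (Int.isCoprime_two_right.2 h2).mul_right
    ((Int.prime_three.coprime_iff_not_dvd.2 h3).symm)

theorem rep_24n_add_five (n : ℕ) :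
    ∃ x y z : ℤ, Int.gcd x 6 = 1 ∧ Int.gcd y 6 = 1 ∧ Int.gcd z 6 = 1 ∧
      24 * (n : ℤ) + 5 = x ^ 2 + y ^ 2 + 3 * z ^ 2 := by
  obtain ⟨x, y, z, hx, hy, hz, h⟩ :=
    exists_odd_eq_sq_add_sq_add_three_mul_sq (m := 24 * n + 5) (by lia) (by lia)
  push_cast at h
  obtain ⟨hx3, hy3⟩ := not_three_dvd_of_sq_add_sq_emod_three (x := x) (y := y) (by lia)
  obtain ⟨u, w, hu, hw, hw3, heq⟩ := exists_odd_not_three_dvd_sq_add_three_mul_sq_eq hy hz hy3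
  obtain ⟨-, hu3⟩ := not_three_dvd_of_sq_add_sq_emod_three (x := x) (y := u) (by lia)
  exact ⟨x, u, w, gcd_six_eq_one_of_odd_of_not_three_dvd hx hx3,
    gcd_six_eq_one_of_odd_of_not_three_dvd hu hu3,
    gcd_six_eq_one_of_odd_of_not_three_dvd hw hw3, by linarith⟩
end
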